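/- Let G be a finite connected simple graph with at least three vertices. Then the minimum cardinality Ψ(L(G)) of a doubly resolving set of the line graph L(G) satisfies Ψ(L(G)) ≤ |V(G)| − 1. -/

import Mathlib

open SimpleGraph

variable {V : Type*}

/-- `S` is a doubly resolving set of `G`: every pair of distinct vertices is doubly
resolved by some pair of vertices of `S`. -/
def IsDoublyResolvingSet (G : SimpleGraph V) (S : Set V) : Prop :=
  ∀ u v : V, u ≠ v → ∃ x ∈ S, ∃ y ∈ S,
    (G.dist u x : ℤ) - (G.dist u y : ℤ) ≠ (G.dist v x : ℤ) - (G.dist v y : ℤ)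

/-- `Ψ(G)`: the minimum cardinality of a doubly resolving set of `G`. -/
noncomputable def psi (G : SimpleGraph V) : ℕ :=
  sInf {n | ∃ S : Set V, IsDoublyResolvingSet G S ∧ S.ncard = n}

/-- The degree of a vertex, as the cardinality of its neighbor set. -/
noncomputable def deg (G : SimpleGraph V) (v : V) : ℕ := (G.neighborSet v).ncard

/-- The maximum degree `Δ(G)`. -/
noncomputable def maxDeg (G : SimpleGraph V) : ℕ := sSup (Set.range (deg G))

/-!
Take a spanning tree `T` of `G` that contains every edge of `G` at some fixed vertex `c`; it has
`|V| - 1` edges, and these form a doubly resolving set of the line graph. Indeed every edge `e`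
outside `T` meets at least two edges of `T`, so two edges can fail to be doubly resolved only if
both lie outside `T` and they meet the same edges of `T`. For distinct such `e` and `f`, a `T`-edge
at a vertex of `e \ f` must end in `f \ e` and vice versa, so `e ∆ f` is closed under `T`-adjacency
and hence is all of `V`. But then `c` lies on `e` or on `f`, which is therefore an edge of `T`.
-/

section DoublyResolving

variable {G : SimpleGraph V} {S : Set V}

theorem isDoublyResolvingSet_iff_forall_dist_eq_add :
    IsDoublyResolvingSet G S ↔
      ∀ u v : V, ∀ k : ℤ, (∀ x ∈ S, (G.dist u x : ℤ) = G.dist v x + k) → u = v := by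
  constructor
  · intro hS u v k hk
    by_contra hne
    obtain ⟨x, hx, y, hy, hxy⟩ := hS u v hne
    exact hxy (by rw [hk x hx, hk y hy]; ring)
  · intro h u v hne
    contrapose! hne with hres
    obtain rfl | ⟨y, hy⟩ := S.eq_empty_or_nonempty
    · exact h u v 0 (by simp)
    · exact h u v (G.dist u y - G.dist v y) fun x hx ↦ by linarith [hres x hx y hy]

theorem not_forall_dist_eq_add_of_mem_of_notMem (hG : G.Preconnected) {u v : V} (hu : u ∈ S)
    (hv : v ∉ S) (hnbr : (S ∩ G.neighborSet v).Nontrivial) (k : ℤ) :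
    ¬ ∀ x ∈ S, (G.dist u x : ℤ) = G.dist v x + k := by
  intro hk
  obtain ⟨x, ⟨hxS, hvx⟩, hxu⟩ := hnbr.exists_ne u
  have hdist_vx : G.dist v x = 1 := dist_eq_one_iff_adj.2 hvx
  have hdist_ux : 0 < G.dist u x := (hG u x).pos_dist_of_ne hxu.symm
  have hdist_vu : 0 < G.dist v u := (hG v u).pos_dist_of_ne fun h ↦ hv (h ▸ hu)
  have hdist_uu : G.dist u u = 0 := dist_self
  have hk_u := hk u hu
  have hk_x := hk x hxS
  lia

theorem nonneg_of_forall_dist_eq_add (hG : G.Preconnected) {u v : V} {k : ℤ} (hu : u ∉ S)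
    (hnbr : (S ∩ G.neighborSet v).Nonempty)
    (hk : ∀ x ∈ S, (G.dist u x : ℤ) = G.dist v x + k) : 0 ≤ k := by
  obtain ⟨x, hxS, hvx⟩ := hnbr
  have hdist_vx : G.dist v x = 1 := dist_eq_one_iff_adj.2 hvx
  have hdist_ux : 0 < G.dist u x := (hG u x).pos_dist_of_ne fun h ↦ hu (h ▸ hxS)
  have hk_x := hk x hxS
  lia

theorem isDoublyResolvingSet_of_nontrivial_of_injOn (hG : G.Preconnected)
    (hnbr : ∀ u ∉ S, (S ∩ G.neighborSet u).Nontrivial)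
    (hinj : Sᶜ.InjOn fun u ↦ S ∩ G.neighborSet u) : IsDoublyResolvingSet G S := by
  rw [isDoublyResolvingSet_iff_forall_dist_eq_add]
  intro u v k hk
  have hk' : ∀ x ∈ S, (G.dist v x : ℤ) = G.dist u x + -k := fun x hx ↦ by linarith [hk x hx]
  by_cases hu : u ∈ S <;> by_cases hv : v ∈ S
  · have hk_u := hk u hu
    have hk_v := hk v hv
    rw [dist_self, dist_comm] at hk_u
    rw [dist_self] at hk_v
    exact (hG u v).dist_eq_zero_iff.1 (by lia)
  · exact (not_forall_dist_eq_add_of_mem_of_notMem hG hu hv (hnbr v hv) k hk).elim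
  · exact (not_forall_dist_eq_add_of_mem_of_notMem hG hv hu (hnbr u hu) (-k) hk').elim
  · have hk_nonneg : 0 ≤ k := nonneg_of_forall_dist_eq_add hG hu (hnbr v hv).nonempty hk
    have hk_nonpos : 0 ≤ -k := nonneg_of_forall_dist_eq_add hG hv (hnbr u hu).nonempty hk'
    refine hinj hu hv (Set.ext fun x ↦ and_congr_right fun hx ↦ ?_)
    have hdist : G.dist u x = G.dist v x := by have := hk x hx; lia
    rw [mem_neighborSet, mem_neighborSet, ← dist_eq_one_iff_adj, hdist, dist_eq_one_iff_adj]

end DoublyResolving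

theorem eq_univ_of_preconnected_of_forall_adj {G : SimpleGraph V} (hG : G.Preconnected) {s : Set V}
    (hs : s.Nonempty) (hclosed : ∀ ⦃x y⦄, G.Adj x y → x ∈ s → y ∈ s) : s = Set.univ := by
  obtain ⟨a, ha⟩ := hs
  by_contra hne
  obtain ⟨b, hb⟩ := (Set.ne_univ_iff_exists_notMem s).1 hne
  obtain ⟨p⟩ := hG a b
  obtain ⟨d, -, hfst, hsnd⟩ := p.exists_boundary_dart s ha hb
  exact hsnd (hclosed d.adj hfst)

section LineGraph

variable {G T : SimpleGraph V}

theorem reachable_lineGraph_of_mem_of_mem {e f : G.edgeSet} {v : V} (he : v ∈ e.1)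
    (hf : v ∈ f.1) : G.lineGraph.Reachable e f := by
  obtain rfl | hne := eq_or_ne e f
  · exact Reachable.refl e
  · exact (lineGraph_adj_iff_exists.2 ⟨hne, v, he, hf⟩).reachable

theorem preconnected_lineGraph (hG : G.Preconnected) : G.lineGraph.Preconnected := by
  intro e f
  let s : Set V := {v | ∃ g : G.edgeSet, v ∈ g.1 ∧ G.lineGraph.Reachable e g}
  have hclosed : ∀ ⦃x y⦄, G.Adj x y → x ∈ s → y ∈ s := by
    rintro x y hxy ⟨g, hxg, heg⟩
    exact ⟨⟨s(x, y), hxy⟩, Sym2.mem_mk_right x y,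
      heg.trans (reachable_lineGraph_of_mem_of_mem hxg (Sym2.mem_mk_left x y))⟩
  have hs : s = Set.univ := eq_univ_of_preconnected_of_forall_adj hG
    ⟨_, e, e.1.out_fst_mem, Reachable.refl e⟩ hclosed
  obtain ⟨g, hfg, heg⟩ : f.1.out.1 ∈ s := hs ▸ Set.mem_univ _
  exact heg.trans (reachable_lineGraph_of_mem_of_mem hfg f.1.out_fst_mem)

theorem lineGraph_adj_mk_iff_of_notMem (hTG : T ≤ G) {e : G.edgeSet} (he : e.1 ∉ T.edgeSet)
    {x y : V} (hxy : T.Adj x y) :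
    G.lineGraph.Adj e ⟨s(x, y), hTG hxy⟩ ↔ x ∈ e.1 ∨ y ∈ e.1 := by
  have hne : e ≠ ⟨s(x, y), hTG hxy⟩ := by rintro rfl; exact he hxy
  simp [lineGraph_adj_iff_exists, hne, and_or_left, exists_or]

theorem nontrivial_inter_neighborSet_lineGraph (hTG : T ≤ G) (hT : T.Preconnected)
    {e : G.edgeSet} (he : e.1 ∉ T.edgeSet) :
    (Subtype.val ⁻¹' T.edgeSet ∩ G.lineGraph.neighborSet e).Nontrivial := by
  obtain ⟨⟨u, v⟩, huv⟩ := e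
  have hne : u ≠ v := G.ne_of_adj huv
  have : Nontrivial V := ⟨u, v, hne⟩
  obtain ⟨a, hua⟩ := hT.exists_adj_of_nontrivial u
  obtain ⟨b, hvb⟩ := hT.exists_adj_of_nontrivial v
  refine ⟨⟨s(u, a), hTG hua⟩, ⟨hua, ?_⟩, ⟨s(v, b), hTG hvb⟩, ⟨hvb, ?_⟩, fun h ↦ ?_⟩
  · exact (lineGraph_adj_mk_iff_of_notMem hTG he hua).2 (.inl (Sym2.mem_mk_left u v))
  · exact (lineGraph_adj_mk_iff_of_notMem hTG he hvb).2 (.inl (Sym2.mem_mk_right u v))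
  · have heq : s(u, a) = s(v, b) := congrArg Subtype.val h
    have hv : v ∈ s(u, a) := heq ▸ Sym2.mem_mk_left v b
    have huv_eq : s(u, a) = s(u, v) :=
      (Sym2.mem_and_mem_iff hne).1 ⟨Sym2.mem_mk_left u a, hv⟩
    have huv_mem : s(u, v) ∈ T.edgeSet := huv_eq ▸ hua
    exact he huv_mem

theorem mem_and_notMem_of_adj_of_inter_neighborSet_lineGraph_subset (hTG : T ≤ G)
    {e f : G.edgeSet} (he : e.1 ∉ T.edgeSet) (hf : f.1 ∉ T.edgeSet)
    (hsub : Subtype.val ⁻¹' T.edgeSet ∩ G.lineGraph.neighborSet e ⊆ G.lineGraph.neighborSet f)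
    {x y : V} (hxy : T.Adj x y) (hxe : x ∈ e.1) (hxf : x ∉ f.1) : y ∈ f.1 ∧ y ∉ e.1 := by
  constructor
  · have hadj : G.lineGraph.Adj f ⟨s(x, y), hTG hxy⟩ :=
      hsub ⟨hxy, (lineGraph_adj_mk_iff_of_notMem hTG he hxy).2 (.inl hxe)⟩
    exact ((lineGraph_adj_mk_iff_of_notMem hTG hf hxy).1 hadj).resolve_left hxf
  · intro hye
    have he_eq : e.1 = s(x, y) := (Sym2.mem_and_mem_iff hxy.ne).1 ⟨hxe, hye⟩
    exact he (he_eq ▸ hxy)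

theorem symmDiff_eq_univ_of_inter_neighborSet_lineGraph_eq (hTG : T ≤ G) (hT : T.Preconnected)
    {e f : G.edgeSet} (he : e.1 ∉ T.edgeSet) (hf : f.1 ∉ T.edgeSet) (hne : e ≠ f)
    (hnbr : Subtype.val ⁻¹' T.edgeSet ∩ G.lineGraph.neighborSet e =
      Subtype.val ⁻¹' T.edgeSet ∩ G.lineGraph.neighborSet f) :
    symmDiff (e.1 : Set V) f.1 = Set.univ := by
  refine eq_univ_of_preconnected_of_forall_adj hT ?_ fun x y hxy hx ↦ ?_
  · rw [Set.symmDiff_nonempty]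
    exact fun h ↦ hne (Subtype.ext (SetLike.coe_injective h))
  · obtain ⟨hxe, hxf⟩ | ⟨hxf, hxe⟩ := hx
    · exact .inr (mem_and_notMem_of_adj_of_inter_neighborSet_lineGraph_subset hTG he hf
        (hnbr.trans_subset Set.inter_subset_right) hxy hxe hxf)
    · exact .inl (mem_and_notMem_of_adj_of_inter_neighborSet_lineGraph_subset hTG hf he
        (hnbr.symm.trans_subset Set.inter_subset_right) hxy hxf hxe)

theorem isDoublyResolvingSet_lineGraph_of_incidenceSet_subset (hTG : T ≤ G)
    (hT : T.Preconnected) {c : V} (hc : G.incidenceSet c ⊆ T.edgeSet) :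
    IsDoublyResolvingSet G.lineGraph (Subtype.val ⁻¹' T.edgeSet) := by
  refine isDoublyResolvingSet_of_nontrivial_of_injOn (preconnected_lineGraph (hT.mono hTG))
    (fun e he ↦ nontrivial_inter_neighborSet_lineGraph hTG hT he) fun e he f hf hnbr ↦ ?_
  by_contra hne
  have hcover : c ∈ symmDiff (e.1 : Set V) f.1 :=
    symmDiff_eq_univ_of_inter_neighborSet_lineGraph_eq hTG hT he hf hne hnbr ▸ Set.mem_univ c
  obtain ⟨hce, -⟩ | ⟨hcf, -⟩ := hcover
  · exact he (hc ⟨e.2, hce⟩)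
  · exact hf (hc ⟨f.2, hcf⟩)

end LineGraph

theorem exists_isTree_le_incidenceSet_subset {G : SimpleGraph V} (hG : G.Connected) (c : V) :
    ∃ T ≤ G, T.IsTree ∧ G.incidenceSet c ⊆ T.edgeSet := by
  obtain ⟨T, hstar, hTG, hT⟩ := hG.exists_isTree_le_of_le_of_isAcyclic
    (inf_le_right : starGraph c ⊓ G ≤ G) ((isAcyclic_starGraph c).anti inf_le_left)
  refine ⟨T, hTG, hT, ?_⟩
  rintro ⟨x, y⟩ ⟨hxy, hcxy⟩
  have hcenter : x = c ∨ y = c := (Sym2.mem_iff.1 hcxy).imp Eq.symm Eq.symm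
  exact hstar ⟨starGraph_adj.2 ⟨G.ne_of_adj hxy, hcenter⟩, hxy⟩

theorem ncard_preimage_edgeSet_add_one [Finite V] {G T : SimpleGraph V} (hTG : T ≤ G)
    (hT : T.IsTree) :
    (Subtype.val ⁻¹' T.edgeSet : Set G.edgeSet).ncard + 1 = Nat.card V := by
  rw [Set.ncard_preimage_of_injective_subset_range Subtype.val_injective
    (Subtype.range_val.symm ▸ edgeSet_mono hTG), ← Nat.card_coe_set_eq]
  exact (isTree_iff_connected_and_card.1 hT).2

theorem psi_le_ncard {G : SimpleGraph V} {S : Set V} (hS : IsDoublyResolvingSet G S) :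
    psi G ≤ S.ncard :=
  Nat.sInf_le ⟨S, hS, rfl⟩

/-- For a finite connected simple graph `G` with at least three vertices,
`Ψ(L(G)) ≤ |V(G)| - 1`. -/
theorem psi_lineGraph_upper_bound {V : Type*} [Fintype V] (G : SimpleGraph V)
    (hconn : G.Connected) (hcard : 3 ≤ Fintype.card V) :
    psi G.lineGraph ≤ Fintype.card V - 1 := by
  obtain ⟨c⟩ := hconn.nonempty
  obtain ⟨T, hTG, hT, hc⟩ := exists_isTree_le_incidenceSet_subset hconn c
  have hdrs : IsDoublyResolvingSet G.lineGraph (Subtype.val ⁻¹' T.edgeSet) :=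
    isDoublyResolvingSet_lineGraph_of_incidenceSet_subset hTG hT.connected.preconnected hc
  have hncard := ncard_preimage_edgeSet_add_one hTG hT
  rw [Nat.card_eq_fintype_card] at hncard
  exact (psi_le_ncard hdrs).trans (Nat.le_sub_one_of_lt (by lia))
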